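/- Let T ∈ ℝ^{n×⋯×n} be a t-tensor and let s ∈ {0, 1, …, t}. Then ‖T‖_cb equals the maximum, over all positive semidefinite matrices X of size (n^s + n^{t−s}) × (n^s + n^{t−s}), with rows/columns indexed by [n]^s ⊔ [n]^{t−s}, satisfying (i) all diagonal entries equal 1, (ii) for every ℓ ∈ [t−s−1], all prefixes i, i' ∈ [n]^ℓ and suffixes j, k ∈ [n]^{t−s−ℓ}: X_{i·j, i·k} = X_{i'·j, i'·k} (indices in the second block), and (iii) for every ℓ ∈ [s−1], all tuples i, i' ∈ [n]^ℓ and j, k ∈ [n]^{s−ℓ}: X_{j·i, k·i} = X_{j·i', k·i'} (indices in the first block), of the quantity Σ_{a ∈ [n]^s, b ∈ [n]^{t−s}} T_{a·b} · X_{a, b}. Moreover this maximum is attained. -/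

import Mathlib

/-!
Write `r = t - s`. A matrix `X` is feasible exactly when it is the Gram matrix of unit vectors
`u_a` (`a ∈ [n]^s`) and `v_b` (`b ∈ [n]^r`) of the form
`u_a = (U_1(a_1) ⋯ U_s(a_s))ᵀ u` and `v_b = U_{s+1}(b_1) ⋯ U_t(b_r) v` with orthogonal `U_q(i)`, and
then the objective equals `⟨u, (∑ T_i U_1(i_1) ⋯ U_t(i_t)) v⟩`.

* From orthogonal matrices and unit vectors `u, v` to a feasible `X`
  (`exists_feasible_of_orthogonal`): a common prefix of two second-block indices contributes a common
  orthogonal factor on the left, which cancels in the inner product; likewise for common suffixes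
  in the first block.
* From a feasible `X` to orthogonal matrices (`Feasible.exists_orthogonal`): factor `X` as a Gram
  matrix. The families `(v_{i₀·b})_b` and `(v_{i·b})_b` have equal Gram matrices, so some orthogonal
  `U(i)` maps the first to the second (`exists_orthogonal_of_gram_eq`); induction on the length of
  `b`, applied to `(v_{i₀·b})_b`, produces all remaining factors (`PrefixGram.exists_prodU`).
  The first block reduces to the same lemma by reversing tuples.

The feasible set is compact and contains the identity matrix, whose objective is `0`, so the
objective has a nonnegative maximum over it. By the first item this maximum bounds every
`‖∑ T_i U_1(i_1) ⋯ U_t(i_t)‖` (in particular the supremum defining `cbNorm` is over a bounded set),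
and by the second item it is at most `cbNorm`.
-/

open Matrix

/-- Concatenation of a tuple in `[n]^ℓ` with a tuple in `[n]^m`, viewed as a tuple in `[n]^t`
via the identity `ℓ + m = t`. -/
def tapp {n ℓ m t : ℕ} (h : ℓ + m = t) (i : Fin ℓ → Fin n) (j : Fin m → Fin n) :
    Fin t → Fin n :=
  fun q => Fin.append i j (Fin.cast h.symm q)

/-- The ordered matrix product `U 0 (i 0) * U 1 (i 1) * ⋯ * U (t-1) (i (t-1))`. -/
def prodU {n t d : ℕ} (U : Fin t → Fin n → Matrix (Fin d) (Fin d) ℝ)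
    (i : Fin t → Fin n) : Matrix (Fin d) (Fin d) ℝ :=
  (List.ofFn fun j => U j (i j)).prod

/-- The spectral (operator) norm of a real `d × d` matrix. -/
noncomputable def specNorm {d : ℕ} (A : Matrix (Fin d) (Fin d) ℝ) : ℝ :=
  ‖(Matrix.toEuclideanCLM (𝕜 := ℝ) A)‖

/-- The completely bounded norm of a `t`-tensor `T` acting on `ℝ^n`:
`sup ‖∑_{i ∈ [n]^t} T_i U_1(i_1)⋯U_t(i_t)‖` over all `d ∈ ℕ` and orthogonal matrices
`U_j(i) ∈ O(d)`. -/
noncomputable def cbNorm (n t : ℕ) (T : (Fin t → Fin n) → ℝ) : ℝ :=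
  sSup { r | ∃ d : ℕ, ∃ U : Fin t → Fin n → Matrix (Fin d) (Fin d) ℝ,
    (∀ j i, (U j i)ᵀ * U j i = 1) ∧
    r = specNorm (∑ i : Fin t → Fin n, T i • prodU U i) }

/-! ### Vectors with equal Gram matrices -/

theorem inner_toLp_eq_dotProduct {d : ℕ} (x y : Fin d → ℝ) :
    inner ℝ (WithLp.toLp 2 x : EuclideanSpace ℝ (Fin d)) (WithLp.toLp 2 y) = x ⬝ᵥ y := by
  rw [EuclideanSpace.inner_toLp_toLp, star_trivial, dotProduct_comm]

/-- Two finite families in `ℝ^d` with the same Gram matrix differ by an orthogonal matrix: the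
correspondence `v i ↦ w i` defines a linear isometry on the span of the `v i`, which extends to the
whole space. -/
theorem exists_orthogonal_of_gram_eq {ι : Type*} [Fintype ι] [DecidableEq ι] {d : ℕ}
    (v w : ι → Fin d → ℝ) (h : ∀ i j, v i ⬝ᵥ v j = w i ⬝ᵥ w j) :
    ∃ U : Matrix (Fin d) (Fin d) ℝ, Uᵀ * U = 1 ∧ ∀ i, U *ᵥ v i = w i := by
  let f : (ι → ℝ) →ₗ[ℝ] EuclideanSpace ℝ (Fin d) :=
    Fintype.linearCombination ℝ fun i => WithLp.toLp 2 (v i)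
  let g : (ι → ℝ) →ₗ[ℝ] EuclideanSpace ℝ (Fin d) :=
    Fintype.linearCombination ℝ fun i => WithLp.toLp 2 (w i)
  have hnorm : ∀ x, ‖g x‖ = ‖f x‖ := by
    intro x
    rw [← sq_eq_sq₀ (norm_nonneg _) (norm_nonneg _), ← real_inner_self_eq_norm_sq,
      ← real_inner_self_eq_norm_sq]
    simp only [f, g, Fintype.linearCombination_apply, sum_inner, inner_sum, real_inner_smul_left,
      real_inner_smul_right, inner_toLp_eq_dotProduct, h]
  have hker : LinearMap.ker f ≤ LinearMap.ker g := by
    intro x hx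
    rw [LinearMap.mem_ker] at hx ⊢
    rw [← norm_eq_zero, hnorm, hx, norm_zero]
  let L₀ : LinearMap.range f →ₗ[ℝ] EuclideanSpace ℝ (Fin d) :=
    ((LinearMap.ker f).liftQ g hker) ∘ₗ f.quotKerEquivRange.symm.toLinearMap
  have hL₀ : ∀ x, L₀ ⟨f x, LinearMap.mem_range_self f x⟩ = g x := by
    intro x
    have : f.quotKerEquivRange.symm ⟨f x, LinearMap.mem_range_self f x⟩ =
        (LinearMap.ker f).mkQ x := by
      rw [LinearEquiv.symm_apply_eq]; rfl
    simp [L₀, this]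
  let L : LinearMap.range f →ₗᵢ[ℝ] EuclideanSpace ℝ (Fin d) :=
    { toLinearMap := L₀
      norm_map' := by
        rintro ⟨_, x, rfl⟩
        rw [hL₀, hnorm]; rfl }
  let M := L.extend
  refine ⟨(Matrix.toEuclideanLin (𝕜 := ℝ)).symm M.toLinearMap, ?_, ?_⟩
  · set U := (Matrix.toEuclideanLin (𝕜 := ℝ)).symm M.toLinearMap with hU
    have hM : ∀ x : EuclideanSpace ℝ (Fin d), M x = Matrix.toEuclideanLin U x := by
      intro x; simp [hU]
    ext i j
    have := M.inner_map_map (EuclideanSpace.single i (1 : ℝ)) (EuclideanSpace.single j (1 : ℝ))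
    rw [hM, hM, Matrix.toLpLin_apply, Matrix.toLpLin_apply, inner_toLp_eq_dotProduct,
      EuclideanSpace.inner_single_left] at this
    simpa [dotProduct, Matrix.mul_apply, Matrix.one_apply, Pi.single_apply] using this
  · intro i
    have h1 : M (f (Pi.single i 1)) = g (Pi.single i 1) := by
      rw [← hL₀]
      exact L.extend_apply ⟨f (Pi.single i 1), LinearMap.mem_range_self f _⟩
    set U := (Matrix.toEuclideanLin (𝕜 := ℝ)).symm M.toLinearMap with hU
    have hM : ∀ x : EuclideanSpace ℝ (Fin d), M x = Matrix.toEuclideanLin U x := by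
      intro x; simp [hU]
    rw [hM] at h1
    have h2 := congrArg WithLp.ofLp h1
    simpa [f, g, Fintype.linearCombination_apply_single, Matrix.toLpLin_apply] using h2

/-! ### Products of orthogonal matrices -/

/-- The kernel `G` on `[n]^m` is unchanged when a common prefix of positive length of its two
arguments is replaced by another common prefix. The split of a tuple at position `ℓ` is encoded
pointwise; `ℓ ≥ m` is allowed, and then the condition says that `G` is constant on the diagonal. -/
def PrefixGram {m n : ℕ} (G : (Fin m → Fin n) → (Fin m → Fin n) → ℝ) : Prop :=
  ∀ ℓ : ℕ, 0 < ℓ → ∀ b c b' c' : Fin m → Fin n,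
    (∀ q : Fin m, q.val < ℓ → b q = c q) → (∀ q : Fin m, q.val < ℓ → b' q = c' q) →
    (∀ q : Fin m, ℓ ≤ q.val → b q = b' q) → (∀ q : Fin m, ℓ ≤ q.val → c q = c' q) →
    G b c = G b' c'

theorem prodU_cons {n m d : ℕ} (U : Fin (m + 1) → Fin n → Matrix (Fin d) (Fin d) ℝ)
    (b : Fin (m + 1) → Fin n) :
    prodU U b = U 0 (b 0) * prodU (fun q => U q.succ) (Fin.tail b) := by
  simp [prodU, List.ofFn_succ, Fin.tail]

theorem prodU_append {n m k d : ℕ} (U : Fin (m + k) → Fin n → Matrix (Fin d) (Fin d) ℝ)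
    (a : Fin m → Fin n) (b : Fin k → Fin n) :
    prodU U (Fin.append a b) =
      prodU (fun q => U (Fin.castAdd k q)) a * prodU (fun q => U (Fin.natAdd m q)) b := by
  simp only [prodU, List.ofFn_add, List.prod_append]
  congr 3
  · ext q
    have := Fin.append_left a b q
    simp_all [Fin.castAdd]
  · ext q; simp

theorem prodU_orthogonal {n m d : ℕ} {U : Fin m → Fin n → Matrix (Fin d) (Fin d) ℝ}
    (hU : ∀ q i, (U q i)ᵀ * U q i = 1) (b : Fin m → Fin n) : (prodU U b)ᵀ * prodU U b = 1 := by
  induction m with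
  | zero => simp [prodU]
  | succ m ih =>
    rw [prodU_cons, Matrix.transpose_mul, Matrix.mul_assoc, ← Matrix.mul_assoc (U 0 (b 0))ᵀ, hU,
      Matrix.one_mul]
    exact ih (fun q i => hU q.succ i) _

/-- Transposing a product reverses the order of its factors; this turns statements about prefixes
into statements about suffixes. -/
theorem prodU_rev_transpose {n m d : ℕ} (U : Fin m → Fin n → Matrix (Fin d) (Fin d) ℝ)
    (a : Fin m → Fin n) :
    (prodU U (a ∘ Fin.rev))ᵀ = prodU (fun q i => (U q.rev i)ᵀ) a := by
  rw [prodU, Matrix.transpose_list_prod, prodU]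
  congr 1
  apply List.ext_getElem
  · simp
  · intro q h1 h2
    simp at h1 h2
    have h3 : Fin.rev (⟨q, h2⟩ : Fin m) = ⟨m - 1 - q, by omega⟩ := by
      ext; simp; omega
    have h4 : Fin.rev (⟨m - 1 - q, by omega⟩ : Fin m) = ⟨q, h2⟩ := by
      rw [← h3, Fin.rev_rev]
    simp [h3, h4]

theorem dotProduct_mulVec_orthogonal {d : ℕ} {U : Matrix (Fin d) (Fin d) ℝ} (hU : Uᵀ * U = 1)
    (x y : Fin d → ℝ) : (U *ᵥ x) ⬝ᵥ (U *ᵥ y) = x ⬝ᵥ y := by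
  rw [Matrix.dotProduct_mulVec, ← Matrix.mulVec_transpose, Matrix.mulVec_mulVec, hU,
    Matrix.one_mulVec]

/-- Unit vectors `v b` whose Gram kernel is invariant under changes of a common prefix all arise from
a single vector `w` by applying products of orthogonal matrices. Only `‖w‖ ≤ 1` is claimed because
for `n = 0 < m` the family is empty and `w = 0` is used. -/
theorem PrefixGram.exists_prodU {m n d : ℕ} (v : (Fin m → Fin n) → Fin d → ℝ)
    (hG : PrefixGram fun b c => v b ⬝ᵥ v c) (h1 : ∀ b, v b ⬝ᵥ v b = 1) :
    ∃ U : Fin m → Fin n → Matrix (Fin d) (Fin d) ℝ, (∀ q i, (U q i)ᵀ * U q i = 1) ∧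
      ∃ w : Fin d → ℝ, w ⬝ᵥ w ≤ 1 ∧ ∀ b, v b = prodU U b *ᵥ w := by
  induction m with
  | zero =>
    refine ⟨fun q => q.elim0, fun q => q.elim0, v Fin.elim0, (h1 _).le, fun b => ?_⟩
    rw [Subsingleton.elim b Fin.elim0]
    simp [prodU]
  | succ m ih =>
    rcases Nat.eq_zero_or_pos n with rfl | hn
    · exact ⟨fun _ i => i.elim0, fun _ i => i.elim0, 0, by simp, fun b => (b 0).elim0⟩
    let i₀ : Fin n := ⟨0, hn⟩
    obtain ⟨U, hU, w, hw, hv⟩ := ih (fun b => v (Fin.cons i₀ b)) (by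
      intro ℓ hℓ b c b' c' h1 h2 h3 h4
      refine hG (ℓ + 1) (Nat.succ_pos _) _ _ _ _ ?_ ?_ ?_ ?_ <;>
        refine fun q => Fin.cases (by simp) (fun q => ?_) q
      · simpa using h1 q
      · simpa using h2 q
      · simpa using h3 q
      · simpa using h4 q) (fun b => h1 _)
    have key : ∀ i : Fin n, ∃ A : Matrix (Fin d) (Fin d) ℝ, Aᵀ * A = 1 ∧
        ∀ b : Fin m → Fin n, A *ᵥ v (Fin.cons i₀ b) = v (Fin.cons i b) := by
      intro i
      refine exists_orthogonal_of_gram_eq (fun b : Fin m → Fin n => v (Fin.cons i₀ b))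
        (fun b => v (Fin.cons i b)) fun b c => ?_
      refine hG 1 Nat.one_pos _ _ _ _ ?_ ?_ ?_ ?_ <;>
        refine fun q => Fin.cases (by simp) (fun q => ?_) q <;> simp
    choose A hA hAv using key
    have hAU : ∀ q i, ((Fin.cons A U : Fin (m + 1) → Fin n → Matrix (Fin d) (Fin d) ℝ) q i)ᵀ *
        (Fin.cons A U : Fin (m + 1) → Fin n → Matrix (Fin d) (Fin d) ℝ) q i = 1 := by
      intro q
      refine Fin.cases ?_ (fun q => ?_) q
      · simpa using hA
      · simpa using hU q
    refine ⟨Fin.cons A U, hAU, w, hw, fun b => ?_⟩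
    rw [prodU_cons, ← Matrix.mulVec_mulVec]
    simp only [Fin.cons_zero, Fin.cons_succ]
    rw [← hv, hAv, Fin.cons_self_tail]

/-! ### The spectral norm through dot products -/

theorem dotProduct_le_specNorm {d : ℕ} (M : Matrix (Fin d) (Fin d) ℝ) (u v : Fin d → ℝ)
    (hu : u ⬝ᵥ u ≤ 1) (hv : v ⬝ᵥ v ≤ 1) : u ⬝ᵥ (M *ᵥ v) ≤ specNorm M := by
  have hn : ∀ x : Fin d → ℝ, x ⬝ᵥ x ≤ 1 → ‖(WithLp.toLp 2 x : EuclideanSpace ℝ (Fin d))‖ ≤ 1 := by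
    intro x hx
    rw [← sq_le_one_iff₀ (norm_nonneg _), ← real_inner_self_eq_norm_sq,
      inner_toLp_eq_dotProduct]
    exact hx
  have h := Matrix.inner_toEuclideanCLM M (WithLp.toLp 2 u) (WithLp.toLp 2 v)
  rw [show u ⬝ᵥ (M *ᵥ v) = _ from h.symm]
  calc _ ≤ ‖(WithLp.toLp 2 u : EuclideanSpace ℝ (Fin d))‖ *
        ‖Matrix.toEuclideanCLM (𝕜 := ℝ) M (WithLp.toLp 2 v)‖ := real_inner_le_norm _ _
    _ ≤ 1 * (‖Matrix.toEuclideanCLM (𝕜 := ℝ) M‖ * 1) := by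
        gcongr
        · exact hn u hu
        · exact (ContinuousLinearMap.le_opNorm _ _).trans (by gcongr; exact hn v hv)
    _ = specNorm M := by simp [specNorm]

theorem specNorm_le {d : ℕ} (M : Matrix (Fin d) (Fin d) ℝ) {c : ℝ} (hc : 0 ≤ c)
    (h : ∀ u v : Fin d → ℝ, u ⬝ᵥ u = 1 → v ⬝ᵥ v = 1 → u ⬝ᵥ (M *ᵥ v) ≤ c) :
    specNorm M ≤ c := by
  have hn : ∀ x : EuclideanSpace ℝ (Fin d), ‖x‖ = 1 → x.ofLp ⬝ᵥ x.ofLp = 1 := by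
    intro x hx
    rw [← inner_toLp_eq_dotProduct, WithLp.toLp_ofLp, real_inner_self_eq_norm_sq, hx, one_pow]
  refine ContinuousLinearMap.opNorm_le_of_unit_norm hc fun x hx => ?_
  set y := Matrix.toEuclideanCLM (𝕜 := ℝ) M x with hy
  rcases eq_or_ne y 0 with h0 | h0
  · rw [h0, norm_zero]; exact hc
  have hu : ‖(‖y‖⁻¹ • y)‖ = 1 := norm_smul_inv_norm (𝕜 := ℝ) h0
  have h1 := h _ _ (hn _ hu) (hn _ hx)
  rw [← Matrix.inner_toEuclideanCLM, ← hy, real_inner_smul_left, real_inner_self_eq_norm_sq] at h1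
  have : ‖y‖ ≠ 0 := norm_ne_zero_iff.2 h0
  calc ‖y‖ = ‖y‖⁻¹ * ‖y‖ ^ 2 := by field_simp
    _ ≤ c := h1

/-! ### The feasible set -/

/-- The constraints of the semidefinite program, with `r` in place of `t - s`. -/
def Feasible (n s r : ℕ)
    (X : Matrix ((Fin s → Fin n) ⊕ (Fin r → Fin n)) ((Fin s → Fin n) ⊕ (Fin r → Fin n)) ℝ) : Prop :=
  X.PosSemidef ∧ (∀ a, X a a = 1) ∧
    (∀ ℓ m : ℕ, ∀ h : ℓ + m = r, 0 < ℓ → 0 < m →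
      ∀ (i i' : Fin ℓ → Fin n) (j k : Fin m → Fin n),
        X (Sum.inr (tapp h i j)) (Sum.inr (tapp h i k)) =
          X (Sum.inr (tapp h i' j)) (Sum.inr (tapp h i' k))) ∧
    (∀ m ℓ : ℕ, ∀ h : m + ℓ = s, 0 < m → 0 < ℓ →
      ∀ (i i' : Fin ℓ → Fin n) (j k : Fin m → Fin n),
        X (Sum.inl (tapp h j i)) (Sum.inl (tapp h k i)) =
          X (Sum.inl (tapp h j i')) (Sum.inl (tapp h k i')))

/-- The objective of the semidefinite program, with `t` split as `s + r`. -/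
def objective {n s r t : ℕ} (h : s + r = t) (T : (Fin t → Fin n) → ℝ)
    (X : Matrix ((Fin s → Fin n) ⊕ (Fin r → Fin n)) ((Fin s → Fin n) ⊕ (Fin r → Fin n)) ℝ) : ℝ :=
  ∑ a : Fin s → Fin n, ∑ b : Fin r → Fin n, T (tapp h a b) * X (Sum.inl a) (Sum.inr b)

theorem tapp_rfl {n ℓ m : ℕ} (i : Fin ℓ → Fin n) (j : Fin m → Fin n) :
    tapp rfl i j = Fin.append i j := rfl

theorem sum_tensor_eq {n s r d : ℕ} (T : (Fin (s + r) → Fin n) → ℝ)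
    (U : Fin (s + r) → Fin n → Matrix (Fin d) (Fin d) ℝ) (u v : Fin d → ℝ) :
    u ⬝ᵥ ((∑ i, T i • prodU U i) *ᵥ v) =
      ∑ a : Fin s → Fin n, ∑ b : Fin r → Fin n, T (Fin.append a b) *
        (((prodU (fun q => U (Fin.castAdd r q)) a)ᵀ *ᵥ u) ⬝ᵥ
          (prodU (fun q => U (Fin.natAdd s q)) b *ᵥ v)) := by
  rw [← (Fin.appendEquiv s r).sum_comp, Fintype.sum_prod_type]
  simp only [Matrix.sum_mulVec, dotProduct_sum, Matrix.smul_mulVec, dotProduct_smul,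
    smul_eq_mul]
  refine Finset.sum_congr rfl fun a _ => Finset.sum_congr rfl fun b _ => ?_
  rw [Matrix.mulVec_transpose, ← Matrix.dotProduct_mulVec, Matrix.mulVec_mulVec, ← prodU_append]
  rfl

/-- Orthogonal matrices together with unit vectors `u`, `v` give a feasible matrix, the Gram matrix
of `(U_1(a_1) ⋯ U_s(a_s))ᵀ u` and `U_{s+1}(b_1) ⋯ U_{s+r}(b_r) v`. -/
theorem exists_feasible_of_orthogonal {n s r d : ℕ} (T : (Fin (s + r) → Fin n) → ℝ)
    (U : Fin (s + r) → Fin n → Matrix (Fin d) (Fin d) ℝ) (hU : ∀ q i, (U q i)ᵀ * U q i = 1)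
    (u v : Fin d → ℝ) (hu : u ⬝ᵥ u = 1) (hv : v ⬝ᵥ v = 1) :
    ∃ X, Feasible n s r X ∧ objective rfl T X = u ⬝ᵥ ((∑ i, T i • prodU U i) *ᵥ v) := by
  set A := fun q : Fin s => U (Fin.castAdd r q) with hA
  set B := fun q : Fin r => U (Fin.natAdd s q) with hB
  have hAo : ∀ q i, (A q i)ᵀ * A q i = 1 := fun q i => hU _ i
  have hBo : ∀ q i, (B q i)ᵀ * B q i = 1 := fun q i => hU _ i
  have htr : ∀ {m : ℕ} (C : Fin m → Fin n → Matrix (Fin d) (Fin d) ℝ),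
      (∀ q i, (C q i)ᵀ * C q i = 1) → ∀ a, ((prodU C a)ᵀ)ᵀ * (prodU C a)ᵀ = 1 := by
    intro m C hC a
    rw [Matrix.transpose_transpose]
    exact mul_eq_one_comm.1 (prodU_orthogonal hC a)
  let z : (Fin s → Fin n) ⊕ (Fin r → Fin n) → Fin d → ℝ :=
    Sum.elim (fun a => (prodU A a)ᵀ *ᵥ u) (fun b => prodU B b *ᵥ v)
  refine ⟨Matrix.of fun p q => z p ⬝ᵥ z q, ⟨?_, ?_, ?_, ?_⟩, ?_⟩
  · have : (Matrix.of fun p q => z p ⬝ᵥ z q) = (Matrix.of z) * (Matrix.of z)ᴴ := by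
      ext p q; simp [Matrix.mul_apply, dotProduct]
    rw [this]
    exact Matrix.posSemidef_self_mul_conjTranspose _
  · rintro (a | b)
    · simpa [z, dotProduct_mulVec_orthogonal (htr A hAo a)] using hu
    · simpa [z, dotProduct_mulVec_orthogonal (prodU_orthogonal hBo b)] using hv
  · rintro ℓ m rfl - - i i' j k
    have hP := prodU_orthogonal (U := fun q => B (Fin.castAdd m q)) (fun q i => hBo _ i)
    simp only [Matrix.of_apply, z, Sum.elim_inr, tapp_rfl, prodU_append, ← Matrix.mulVec_mulVec,
      dotProduct_mulVec_orthogonal (hP _)]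
  · rintro m ℓ rfl - - i i' j k
    have hP := htr (fun q => A (Fin.natAdd m q)) (fun q i => hAo _ i)
    simp only [Matrix.of_apply, z, Sum.elim_inl, tapp_rfl, prodU_append, Matrix.transpose_mul,
      ← Matrix.mulVec_mulVec, dotProduct_mulVec_orthogonal (hP _)]
  · rw [sum_tensor_eq]; rfl

theorem Feasible.prefixGram_inr {n s r : ℕ} {X} (hX : Feasible n s r X) :
    PrefixGram fun b c : Fin r → Fin n => X (Sum.inr b) (Sum.inr c) := by
  obtain ⟨-, hd, h2, -⟩ := hX
  intro ℓ hℓ b c b' c' e1 e2 e3 e4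
  rcases le_or_gt r ℓ with hr | hr
  · have h1 : b = c := funext fun q => e1 q (by omega)
    have h2 : b' = c' := funext fun q => e2 q (by omega)
    simp only [h1, h2, hd]
  · obtain ⟨m, hm⟩ := Nat.exists_eq_add_of_lt hr
    obtain rfl : r = ℓ + (m + 1) := by omega
    have hsplit : ∀ x : Fin (ℓ + (m + 1)) → Fin n,
        Fin.append (fun q => x (Fin.castAdd (m + 1) q)) (fun q => x (Fin.natAdd ℓ q)) = x :=
      fun x => Fin.append_castAdd_natAdd
    have key := h2 ℓ (m + 1) rfl hℓ (Nat.succ_pos m)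
      (fun q => b (Fin.castAdd (m + 1) q)) (fun q => b' (Fin.castAdd (m + 1) q))
      (fun q => b (Fin.natAdd ℓ q)) (fun q => c (Fin.natAdd ℓ q))
    have E1 : (fun q => b (Fin.castAdd (m + 1) q)) = fun q => c (Fin.castAdd (m + 1) q) :=
      funext fun q => e1 _ (by simp)
    have E2 : (fun q => b' (Fin.castAdd (m + 1) q)) = fun q => c' (Fin.castAdd (m + 1) q) :=
      funext fun q => e2 _ (by simp)
    have E3 : (fun q => b (Fin.natAdd ℓ q)) = fun q => b' (Fin.natAdd ℓ q) :=
      funext fun q => e3 _ (by simp)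
    have E4 : (fun q => c (Fin.natAdd ℓ q)) = fun q => c' (Fin.natAdd ℓ q) :=
      funext fun q => e4 _ (by simp)
    have s1 := hsplit b
    have s2 := hsplit c
    have s3 := hsplit b'
    have s4 := hsplit c'
    rw [← E1] at s2
    rw [← E3] at s3
    rw [← E2, ← E4] at s4
    simp only [tapp_rfl] at key
    rw [s1, s2, s3, s4] at key
    exact key

/-- The suffix condition on the first block is a prefix condition for reversed tuples. -/
theorem Feasible.prefixGram_inl {n s r : ℕ} {X} (hX : Feasible n s r X) :
    PrefixGram fun b c : Fin s → Fin n =>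
      X (Sum.inl (b ∘ Fin.rev)) (Sum.inl (c ∘ Fin.rev)) := by
  obtain ⟨-, hd, -, h2⟩ := hX
  intro ℓ hℓ b c b' c' e1 e2 e3 e4
  rcases le_or_gt s ℓ with hr | hr
  · have h1 : b = c := funext fun q => e1 q (by omega)
    have h2 : b' = c' := funext fun q => e2 q (by omega)
    simp only [h1, h2, hd]
  · obtain ⟨m, hm⟩ := Nat.exists_eq_add_of_lt hr
    obtain rfl : s = (m + 1) + ℓ := by omega
    have hsplit : ∀ x : Fin ((m + 1) + ℓ) → Fin n,
        Fin.append (fun q => x (Fin.castAdd ℓ q)) (fun q => x (Fin.natAdd (m + 1) q)) = x :=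
      fun x => Fin.append_castAdd_natAdd
    have key := h2 (m + 1) ℓ rfl (Nat.succ_pos m) hℓ
      (fun q => (b ∘ Fin.rev) (Fin.natAdd (m + 1) q))
      (fun q => (b' ∘ Fin.rev) (Fin.natAdd (m + 1) q))
      (fun q => (b ∘ Fin.rev) (Fin.castAdd ℓ q)) (fun q => (c ∘ Fin.rev) (Fin.castAdd ℓ q))
    have E1 : (fun q => (b ∘ Fin.rev) (Fin.natAdd (m + 1) q)) =
        fun q => (c ∘ Fin.rev) (Fin.natAdd (m + 1) q) :=
      funext fun q => e1 _ (by simp [Fin.val_rev]; omega)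
    have E2 : (fun q => (b' ∘ Fin.rev) (Fin.natAdd (m + 1) q)) =
        fun q => (c' ∘ Fin.rev) (Fin.natAdd (m + 1) q) :=
      funext fun q => e2 _ (by simp [Fin.val_rev]; omega)
    have E3 : (fun q => (b ∘ Fin.rev) (Fin.castAdd ℓ q)) =
        fun q => (b' ∘ Fin.rev) (Fin.castAdd ℓ q) :=
      funext fun q => e3 _ (by simp [Fin.val_rev]; omega)
    have E4 : (fun q => (c ∘ Fin.rev) (Fin.castAdd ℓ q)) =
        fun q => (c' ∘ Fin.rev) (Fin.castAdd ℓ q) :=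
      funext fun q => e4 _ (by simp [Fin.val_rev]; omega)
    have s1 := hsplit (b ∘ Fin.rev)
    have s2 := hsplit (c ∘ Fin.rev)
    have s3 := hsplit (b' ∘ Fin.rev)
    have s4 := hsplit (c' ∘ Fin.rev)
    rw [← E1] at s2
    rw [← E3] at s3
    rw [← E2, ← E4] at s4
    simp only [tapp_rfl] at key
    rw [s1, s2, s3, s4] at key
    exact key

open scoped MatrixOrder in
theorem exists_gram_vectors {ι : Type*} [Fintype ι] [DecidableEq ι] {X : Matrix ι ι ℝ}
    (hX : X.PosSemidef) :
    ∃ (d : ℕ) (z : ι → Fin d → ℝ), ∀ p q, X p q = z p ⬝ᵥ z q := by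
  obtain ⟨B, hB⟩ := CStarAlgebra.nonneg_iff_eq_star_mul_self.1 hX.nonneg
  refine ⟨Fintype.card ι, fun p k => B ((Fintype.equivFin ι).symm k) p, fun p q => ?_⟩
  rw [hB, Matrix.star_eq_conjTranspose, Matrix.mul_apply]
  simp only [Matrix.conjTranspose_apply, star_trivial, dotProduct]
  rw [(Fintype.equivFin ι).symm.sum_comp fun k => B k p * B k q]

/-- Every feasible matrix is dominated by orthogonal matrices: its objective is
`⟨u, (∑ T_i U_1(i_1) ⋯ U_t(i_t)) v⟩` for suitable orthogonal `U_q(i)` and vectors `u`, `v` of norm at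
most `1`. -/
theorem Feasible.exists_orthogonal {n s r : ℕ} {X} (hX : Feasible n s r X)
    (T : (Fin (s + r) → Fin n) → ℝ) :
    ∃ (d : ℕ) (U : Fin (s + r) → Fin n → Matrix (Fin d) (Fin d) ℝ),
      (∀ q i, (U q i)ᵀ * U q i = 1) ∧
        objective rfl T X ≤ specNorm (∑ i, T i • prodU U i) := by
  obtain ⟨d, z, hz⟩ := exists_gram_vectors hX.1
  have hd := hX.2.1
  have gl := hX.prefixGram_inl
  have gr := hX.prefixGram_inr
  simp only [hz] at hd gl gr
  obtain ⟨A, hA, u, hu, hAu⟩ := gl.exists_prodU (fun b => z (Sum.inl (b ∘ Fin.rev)))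
    (fun b => hd _)
  obtain ⟨B, hB, v, hv, hBv⟩ := gr.exists_prodU (fun b => z (Sum.inr b)) (fun b => hd _)
  refine ⟨d, Fin.append (fun q i => (A q.rev i)ᵀ) B, ?_, ?_⟩
  · intro q
    refine Fin.addCases (fun q => ?_) (fun q => ?_) q
    · intro i
      rw [Fin.append_left, Matrix.transpose_transpose]
      exact mul_eq_one_comm.1 (hA _ i)
    · intro i
      rw [Fin.append_right]
      exact hB q i
  · refine le_of_eq_of_le ?_ (dotProduct_le_specNorm _ u v hu hv)
    rw [sum_tensor_eq]
    refine Finset.sum_congr rfl fun a _ => Finset.sum_congr rfl fun b _ => ?_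
    simp only [Fin.append_left, Fin.append_right]
    rw [← prodU_rev_transpose, Matrix.transpose_transpose, ← hBv, ← hAu, hz, tapp_rfl]
    congr 4
    ext q; simp

/-- The constraints are closed, and positive semidefiniteness with unit diagonal forces all entries
into `[-1, 1]`. -/
theorem isCompact_feasible (n s r : ℕ) : IsCompact {X | Feasible n s r X} := by
  have hb : {X | Feasible n s r X} ⊆ Set.univ.pi fun _ => Set.univ.pi fun _ => Set.Icc (-1) 1 := by
    intro X hX p _ q _
    obtain ⟨d, z, hz⟩ := exists_gram_vectors hX.1
    have hp := hX.2.1 p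
    have hq := hX.2.1 q
    have h1 : 0 ≤ (z p - z q) ⬝ᵥ (z p - z q) := by
      simpa using dotProduct_star_self_nonneg (z p - z q)
    have h2 : 0 ≤ (z p + z q) ⬝ᵥ (z p + z q) := by
      simpa using dotProduct_star_self_nonneg (z p + z q)
    have hs : z q ⬝ᵥ z p = z p ⬝ᵥ z q := dotProduct_comm _ _
    simp only [sub_dotProduct, dotProduct_sub, add_dotProduct, dotProduct_add] at h1 h2
    rw [hz] at hp hq ⊢
    constructor <;> linarith
  refine IsCompact.of_isClosed_subset
    (isCompact_univ_pi fun _ => isCompact_univ_pi fun _ => isCompact_Icc) ?_ hb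
  have hc : ∀ p q, Continuous fun X : Matrix ((Fin s → Fin n) ⊕ (Fin r → Fin n))
      ((Fin s → Fin n) ⊕ (Fin r → Fin n)) ℝ => X p q :=
    fun p q => (continuous_apply q).comp (continuous_apply p)
  simp only [Feasible, Matrix.posSemidef_iff_dotProduct_mulVec, Set.ofPred_and, Set.ofPred_forall]
  refine IsClosed.inter (IsClosed.inter ?_ ?_) (IsClosed.inter ?_ (IsClosed.inter ?_ ?_))
  · exact isClosed_eq (by fun_prop) continuous_id
  · exact isClosed_iInter fun x => isClosed_le continuous_const (by fun_prop)
  · exact isClosed_iInter fun p => isClosed_eq (hc _ _) continuous_const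
  all_goals
    repeat refine isClosed_iInter fun _ => ?_
    exact isClosed_eq (hc _ _) (hc _ _)

theorem append_inj_iff {n ℓ m : ℕ} {i i' : Fin ℓ → Fin n} {j j' : Fin m → Fin n} :
    Fin.append i j = Fin.append i' j' ↔ i = i' ∧ j = j' :=
  ((Fin.appendEquiv ℓ m).injective.eq_iff (a := (i, j)) (b := (i', j'))).trans Prod.mk_inj

theorem feasible_one (n s r : ℕ) : Feasible n s r 1 := by
  refine ⟨Matrix.PosSemidef.one, fun a => Matrix.one_apply_eq a, ?_, ?_⟩
  · rintro ℓ m rfl - - i i' j k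
    simp [Matrix.one_apply, tapp_rfl, append_inj_iff]
  · rintro ℓ m rfl - - i i' j k
    simp [Matrix.one_apply, tapp_rfl, append_inj_iff]

/-! ### The maximum -/

theorem isGreatest_objective {n s r t : ℕ} (h : s + r = t) (T : (Fin t → Fin n) → ℝ) :
    IsGreatest {x | ∃ X, Feasible n s r X ∧ x = objective h T X} (cbNorm n t T) := by
  subst h
  have hcont : Continuous (objective (n := n) (s := s) (r := r) rfl T) := by
    refine continuous_finsetSum _ fun a _ => continuous_finsetSum _ fun b _ =>
      continuous_const.mul ((continuous_apply _).comp (continuous_apply _))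
  obtain ⟨X, hX, hmax⟩ := (isCompact_feasible n s r).exists_isMaxOn ⟨1, feasible_one n s r⟩
    hcont.continuousOn
  have hmax' : ∀ Y, Feasible n s r Y → objective rfl T Y ≤ objective rfl T X :=
    fun Y hY => hmax hY
  have h0 : 0 ≤ objective rfl T X := by
    refine le_of_eq_of_le ?_ (hmax' 1 (feasible_one n s r))
    simp [objective]
  have hup : objective rfl T X ∈ upperBounds { x | ∃ d : ℕ,
      ∃ U : Fin (s + r) → Fin n → Matrix (Fin d) (Fin d) ℝ,
        (∀ j i, (U j i)ᵀ * U j i = 1) ∧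
        x = specNorm (∑ i : Fin (s + r) → Fin n, T i • prodU U i) } := by
    rintro _ ⟨d, U, hU, rfl⟩
    refine specNorm_le _ h0 fun u v hu hv => ?_
    obtain ⟨Y, hY, hYe⟩ := exists_feasible_of_orthogonal T U hU u v hu hv
    rw [← hYe]
    exact hmax' Y hY
  have hle : ∀ Y, Feasible n s r Y → objective rfl T Y ≤ cbNorm n (s + r) T := by
    intro Y hY
    obtain ⟨d, U, hU, hYU⟩ := hY.exists_orthogonal T
    exact hYU.trans (le_csSup ⟨_, hup⟩ ⟨d, U, hU, rfl⟩)
  refine ⟨⟨X, hX, le_antisymm (csSup_le ?_ hup) (hle X hX)⟩, ?_⟩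
  -- Dimension `d = 0` shows that the set of norms is nonempty.
  · exact ⟨_, 0, fun _ _ => 1, fun _ _ => by simp, rfl⟩
  · rintro _ ⟨Y, hY, rfl⟩
    exact hle Y hY

/-- For any `0 ≤ s ≤ t`, `‖T‖_cb` is the maximum (attained) over positive
semidefinite matrices `X` indexed by `[n]^s ⊔ [n]^{t-s}` with unit diagonal, satisfying the
suffix Gram condition on the second block and the prefix Gram condition on the first block,
of `∑_{a ∈ [n]^s, b ∈ [n]^{t-s}} T_{a·b} X_{a,b}`. -/
theorem stmt_6 (n t s : ℕ) (hs : s ≤ t) (T : (Fin t → Fin n) → ℝ) :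
    IsGreatest
      { r | ∃ X : Matrix ((Fin s → Fin n) ⊕ (Fin (t - s) → Fin n))
                         ((Fin s → Fin n) ⊕ (Fin (t - s) → Fin n)) ℝ,
        X.PosSemidef ∧ (∀ a, X a a = 1) ∧
        (∀ ℓ m : ℕ, ∀ h : ℓ + m = t - s, 0 < ℓ → 0 < m →
          ∀ (i i' : Fin ℓ → Fin n) (j k : Fin m → Fin n),
            X (Sum.inr (tapp h i j)) (Sum.inr (tapp h i k)) =
              X (Sum.inr (tapp h i' j)) (Sum.inr (tapp h i' k))) ∧
        (∀ m ℓ : ℕ, ∀ h : m + ℓ = s, 0 < m → 0 < ℓ →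
          ∀ (i i' : Fin ℓ → Fin n) (j k : Fin m → Fin n),
            X (Sum.inl (tapp h j i)) (Sum.inl (tapp h k i)) =
              X (Sum.inl (tapp h j i')) (Sum.inl (tapp h k i'))) ∧
        r = ∑ a : Fin s → Fin n, ∑ b : Fin (t - s) → Fin n,
              T (tapp (Nat.add_sub_cancel' hs) a b) * X (Sum.inl a) (Sum.inr b) }
      (cbNorm n t T) := by
  have h := isGreatest_objective (Nat.add_sub_cancel' hs) T
  simpa only [Feasible, objective, and_assoc] using h
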